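/- arXiv:2005.00856 — 2 statements merged into one kernel-verified Lean document; each statement's English description precedes it below -/
import Mathlib

section
/- Let k ≥ 1 and m ≥ 1, let r, t be fixed segmented embeddings, and fix a segment index y < k and a coordinate i < m. The partial derivative of the SEEK score f₄(h, r, t) with respect to the coordinate (h_y)_i of the head embedding equals ∑_{0 ≤ x < k} s_{x,y} · (r_x)_i · (t_{w_{x,y}})_i. Equivalently, the segment gradient is ∂f₄/∂h_y = ∑_{0 ≤ x < k} s_{x,y} · (r_x ⊙ t_{w_{x,y}}), where ⊙ is the entry-wise product. -/
open Finset

/-- Multi-linear dot product of three vectors in ℝ^m. -/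
def mdot {m : ℕ} (a b c : Fin m → ℝ) : ℝ := ∑ i : Fin m, a i * b i * c i

/-- Sign s_{x,y}: -1 if x is odd and x + y ≥ k, else 1. -/
def sSign {k : ℕ} (x y : Fin k) : ℝ :=
  if x.val % 2 = 1 ∧ k ≤ x.val + y.val then -1 else 1

/-- Tail index w_{x,y}: y if x even, (x+y) mod k if x odd. -/
def wIdx {k : ℕ} (x y : Fin k) : Fin k :=
  if x.val % 2 = 0 then y else ⟨(x.val + y.val) % k, Nat.mod_lt _ x.pos⟩

/-- SEEK scoring function f₄. -/
def f4 {k m : ℕ} (h r t : Fin k → Fin m → ℝ) : ℝ :=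
  ∑ x : Fin k, ∑ y : Fin k, sSign x y * mdot (r x) (h y) (t (wIdx x y))

/-- All-segments scoring function f₂. -/
def f2 {k m : ℕ} (h r t : Fin k → Fin m → ℝ) : ℝ :=
  ∑ x : Fin k, ∑ y : Fin k, ∑ w : Fin k, mdot (r x) (h y) (t w)

/-- Signed scoring function f₃. -/
def f3 {k m : ℕ} (h r t : Fin k → Fin m → ℝ) : ℝ :=
  ∑ x : Fin k, ∑ y : Fin k, ∑ w : Fin k, sSign x y * mdot (r x) (h y) (t w)

/-!
The score is linear in the head embedding: `f₄(h, r, t) = ∑ y, h_y ⬝ᵥ G_y`, where the coefficient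
vectors `G_y = ∑ x, s_{x,y} • (r_x ⊙ t_{w_{x,y}})` do not involve `h`. Varying one coordinate
`(h_y)_i` changes a single summand, so the partial derivative is the coefficient `(G_y)_i`.
-/

theorem hasDerivAt_sum_update {𝕜 ι F : Type*} {E : ι → Type*} [NontriviallyNormedField 𝕜]
    [Fintype ι] [DecidableEq ι] [NormedAddCommGroup F] [NormedSpace 𝕜 F]
    (φ : ∀ z, E z → F) (v : ∀ z, E z) (y : ι) {u : 𝕜 → E y} {d : F} {c₀ : 𝕜}
    (hφ : HasDerivAt (fun c => φ y (u c)) d c₀) :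
    HasDerivAt (fun c => ∑ z, φ z (Function.update v y (u c) z)) d c₀ := by
  have sum_eq (c : 𝕜) : ∑ z, φ z (Function.update v y (u c) z) =
      φ y (u c) + ∑ z ∈ {y}ᶜ, φ z (v z) := by
    rw [Fintype.sum_eq_add_sum_compl y, Function.update_self]
    congr 1
    refine sum_congr rfl fun z hz => ?_
    rw [Function.update_of_ne (by simpa using hz)]
  simpa only [sum_eq] using hφ.add_const _

theorem hasDerivAt_update_dotProduct {𝕜 ι : Type*} [NontriviallyNormedField 𝕜]
    [Fintype ι] [DecidableEq ι] (b a : ι → 𝕜) (i : ι) (c₀ : 𝕜) :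
    HasDerivAt (fun c => Function.update b i c ⬝ᵥ a) (a i) c₀ :=
  hasDerivAt_sum_update (fun j c => c * a j) b i (hasDerivAt_mul_const (a i))

theorem mdot_eq_dotProduct {m : ℕ} (a b c : Fin m → ℝ) : mdot a b c = b ⬝ᵥ (a * c) :=
  sum_congr rfl fun i _ => by rw [Pi.mul_apply, mul_left_comm, mul_assoc]

section HeadGradient

variable {k m : ℕ} (h r t : Fin k → Fin m → ℝ) (y : Fin k)

/-- The segment gradient `∂f₄/∂h_y = ∑ x, s_{x,y} • (r_x ⊙ t_{w_{x,y}})`, defined by its closed form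
so that it can serve as the coefficient vector of `h_y` in `f₄`; the entry-wise product `⊙` is the
pointwise multiplication of functions. -/
def headGradient : Fin m → ℝ := ∑ x, sSign x y • (r x * t (wIdx x y))

theorem headGradient_apply (i : Fin m) :
    headGradient r t y i = ∑ x, sSign x y * (r x i * t (wIdx x y) i) := by
  simp only [headGradient, Finset.sum_apply, Pi.smul_apply, Pi.mul_apply, smul_eq_mul]

theorem f4_eq_sum_dotProduct_headGradient : f4 h r t = ∑ y, h y ⬝ᵥ headGradient r t y := by
  simp only [f4, headGradient, dotProduct_sum, dotProduct_smul, mdot_eq_dotProduct, smul_eq_mul]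
  exact sum_comm

end HeadGradient

/-- Partial derivative of f₄ with respect to the coordinate (h_y)_i of the
head embedding: ∂f₄/∂(h_y)_i = ∑_x s_{x,y} · (r_x)_i · (t_{w_{x,y}})_i. -/
theorem f4_deriv_head (k m : ℕ) (hk : 1 ≤ k) (hm : 1 ≤ m)
    (h r t : Fin k → Fin m → ℝ) (y : Fin k) (i : Fin m) :
    HasDerivAt
      (fun c : ℝ => f4 (Function.update h y (Function.update (h y) i c)) r t)
      (∑ x : Fin k, sSign x y * (r x i * t (wIdx x y) i)) (h y i) := by
  simp only [f4_eq_sum_dotProduct_headGradient, ← headGradient_apply]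
  exact hasDerivAt_sum_update (fun z v => v ⬝ᵥ headGradient r t z) h y
    (hasDerivAt_update_dotProduct (h y) (headGradient r t y) i (h y i))
end

section
/- Let k ≥ 1 and m ≥ 1, let h, r be fixed segmented embeddings, and fix a segment index w < k and a coordinate i < m. The partial derivative of the SEEK score f₄(h, r, t) with respect to the coordinate (t_w)_i of the tail embedding equals ∑_{0 ≤ x, y < k} 𝟙[w = w_{x,y}] · s_{x,y} · (r_x)_i · (h_y)_i, where 𝟙[w = w_{x,y}] is 1 if w = w_{x,y} and 0 otherwise. -/
open Finset

/-! The score is linear in the tail, so its derivative along a curve of tails is the score at the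
velocity of the curve. Moving only the coordinate `(t_w)_i` gives as velocity the basis vector
`Pi.single w (Pi.single i 1)`, and the score at a basis vector is a sum of coefficients. -/

section CoordinateCurves

open Function

variable {𝕜 : Type*} [NontriviallyNormedField 𝕜]

theorem hasDerivAt_update_comp {ι : Type*} [Finite ι] [DecidableEq ι] {E : ι → Type*}
    [∀ i, NormedAddCommGroup (E i)] [∀ i, NormedSpace 𝕜 (E i)] (x : ∀ i, E i) {i : ι}
    {γ : 𝕜 → E i} {γ' : E i} {c : 𝕜} (hγ : HasDerivAt γ γ' c) :
    HasDerivAt (fun c ↦ update x i (γ c)) (Pi.single i γ') c := by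
  have := Fintype.ofFinite ι
  convert! (hasFDerivAt_update x (γ c)).comp_hasDerivAt c hγ using 1
  ext j
  obtain rfl | hj := eq_or_ne j i <;> simp [*]

theorem hasDerivAt_update_update {ι κ : Type*} [Finite ι] [DecidableEq ι] [Finite κ]
    [DecidableEq κ] (t : ι → κ → 𝕜) (w : ι) (i : κ) (c : 𝕜) :
    HasDerivAt (fun c ↦ update t w (update (t w) i c)) (Pi.single w (Pi.single i 1)) c :=
  have := Fintype.ofFinite κ
  hasDerivAt_update_comp t (hasDerivAt_update (t w) i c)

end CoordinateCurves

section Score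

variable {k m : ℕ}

theorem mdot_single (a b : Fin m → ℝ) (i : Fin m) (c : ℝ) :
    mdot a b (Pi.single i c) = a i * b i * c :=
  dotProduct_single (fun j ↦ a j * b j) c i

theorem mdot_zero_right (a b : Fin m → ℝ) : mdot a b 0 = 0 := by
  simp [mdot]

theorem hasDerivAt_mdot_right (a b : Fin m → ℝ) {v : ℝ → Fin m → ℝ} {v' : Fin m → ℝ} {c : ℝ}
    (hv : HasDerivAt v v' c) : HasDerivAt (fun c ↦ mdot a b (v c)) (mdot a b v') c :=
  HasDerivAt.fun_sum fun j _ ↦ (hasDerivAt_pi.mp hv j).const_mul (a j * b j)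

theorem hasDerivAt_f4_tail (h r : Fin k → Fin m → ℝ) {t : ℝ → Fin k → Fin m → ℝ}
    {t' : Fin k → Fin m → ℝ} {c : ℝ} (ht : HasDerivAt t t' c) :
    HasDerivAt (fun c ↦ f4 h r (t c)) (f4 h r t') c :=
  HasDerivAt.fun_sum fun x _ ↦ HasDerivAt.fun_sum fun y _ ↦
    (hasDerivAt_mdot_right (r x) (h y) (hasDerivAt_pi.mp ht (wIdx x y))).const_mul (sSign x y)

theorem f4_tail_single (h r : Fin k → Fin m → ℝ) (w : Fin k) (v : Fin m → ℝ) :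
    f4 h r (Pi.single w v) =
      ∑ x, ∑ y, (if w = wIdx x y then 1 else 0) * sSign x y * mdot (r x) (h y) v := by
  refine sum_congr rfl fun x _ ↦ sum_congr rfl fun y _ ↦ ?_
  obtain rfl | hw := eq_or_ne w (wIdx x y)
  · simp
  · simp [hw, mdot_zero_right]

end Score

/-- Partial derivative of f₄ with respect to the coordinate (t_w)_i of the tail
embedding: ∂f₄/∂(t_w)_i = ∑_{x,y} 𝟙[w = w_{x,y}] · s_{x,y} · (r_x)_i · (h_y)_i. -/
theorem f4_deriv_tail (k m : ℕ) (hk : 1 ≤ k) (hm : 1 ≤ m)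
    (h r t : Fin k → Fin m → ℝ) (w : Fin k) (i : Fin m) :
    HasDerivAt
      (fun c : ℝ => f4 h r (Function.update t w (Function.update (t w) i c)))
      (∑ x : Fin k, ∑ y : Fin k,
        (if w = wIdx x y then (1 : ℝ) else 0) * sSign x y * (r x i * h y i))
      (t w i) := by
  simpa only [f4_tail_single, mdot_single, mul_one] using
    hasDerivAt_f4_tail h r (hasDerivAt_update_update t w i (t w i))
end
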